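/- Let N ≥ 1, let c ∈ ℝ with 0 ≤ c ≤ 1, let P be the N×N complex circulant permutation matrix indexed by ZMod N with P i k = 1 if k = i − 1 and P i k = 0 otherwise, and let L = (1+c)·I − P − c·P^{N−1}. Then every eigenvalue λ ∈ ℂ of L, with x = Re λ and y = Im λ, satisfies: 0 ≤ x ≤ 4; moreover, if x ≤ 3/2 then y² ≤ 1 − (x−1)², and if 3/2 < x ≤ 4 then y² ≤ (1/2)·(3 − √(1+2x))²·(√(1+2x) − x + 1). In other words, every such eigenvalue lies in the drop-shaped region bounded by the curves f₁,₂(x) = ±√(1−(x−1)²) for x ∈ [0, 3/2] and f₁,₂(x) = ±(1/√2)·(3 − √(1+2x))·√(√(1+2x) − x + 1) for x ∈ (3/2, 4]. -/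

import Mathlib

/-!
The matrix `P` satisfies `P ^ N = 1`, so by the spectral mapping theorem every eigenvalue of `L`
is `(1 + c) - z - c * z ^ (N - 1)` for some `z` with `z ^ N = 1`, i.e. `(1 + c) - z - c * conj z`
with `|z| = 1`. Writing `z = u + i v` this gives `x = (1 + c) (1 - u)` and `y = -(1 - c) v`.

For the circular part, `x (2 - x) - y²` equals `2 c (1 - u) (3 - c - 2 (1 - u))`, which is
nonnegative for `x ≤ 3 / 2`. For the other part, put `s = 1 + c`; then
`s² y² = (2 - s)² x (2 s - x)`, and for fixed `x` the maximum of `y²` over `s` is attained at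
`s = p := √(1 + 2 x) - 1`. After substituting `x = p (p + 2) / 2` the difference between the two
sides factors as a nonnegative multiple of `(s - p)² (2 - p (s - 1))`.
-/

/-- The powers of the cyclic shift by one are the cyclic shifts by `m`. -/
lemma shift_pow (N : ℕ) [NeZero N] (m : ℕ) :
    (Matrix.of fun i k : ZMod N => if k = i - 1 then (1 : ℂ) else 0) ^ m =
      Matrix.of fun i k : ZMod N => if k = i - (m : ZMod N) then (1 : ℂ) else 0 := by
  induction m with
  | zero => ext i k; simp [Matrix.one_apply, eq_comm]
  | succ m ih =>
    rw [pow_succ, ih]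
    ext i k
    simp only [Matrix.mul_apply, Matrix.of_apply, ite_mul, one_mul, zero_mul, Finset.sum_ite_eq',
      Finset.sum_ite_eq, Finset.mem_univ, if_true, Nat.cast_succ, sub_sub]

/-- The circular part of the boundary, for a point of the ellipse with parameter `c`. -/
lemma circle_bound {c u v : ℝ} (hc0 : 0 ≤ c) (hc1 : c ≤ 1) (huv : u ^ 2 + v ^ 2 = 1)
    (hx : (1 + c) * (1 - u) ≤ 3 / 2) :
    ((1 - c) * v) ^ 2 ≤ 1 - ((1 + c) * (1 - u) - 1) ^ 2 := by
  have hu : u ≤ 1 := by nlinarith [sq_nonneg v]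
  -- `(3 - c) (1 + c) ≥ 3` on `[0, 1]`, so `1 - u ≤ (3 - c) / 2`.
  have h1 : 0 ≤ (1 + c) * (3 - c - 2 * (1 - u)) := by nlinarith
  have h2 : 0 ≤ 3 - c - 2 * (1 - u) := nonneg_of_mul_nonneg_right h1 (by linarith)
  have h3 : 0 ≤ 2 * (c * (1 - u)) * (3 - c - 2 * (1 - u)) :=
    mul_nonneg (mul_nonneg (by norm_num) (mul_nonneg hc0 (by linarith))) h2
  have hv : v ^ 2 = 1 - u ^ 2 := by linarith
  rw [mul_pow, hv]
  nlinarith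

/-- The envelope part of the boundary, for a point of the ellipse with parameter `c`. -/
lemma envelope_bound {c u v : ℝ} (hc0 : 0 ≤ c) (hc1 : c ≤ 1) (huv : u ^ 2 + v ^ 2 = 1)
    (hx : (1 + c) * (1 - u) ≤ 4) :
    ((1 - c) * v) ^ 2 ≤ (1 / 2) * (3 - √(1 + 2 * ((1 + c) * (1 - u)))) ^ 2 *
      (√(1 + 2 * ((1 + c) * (1 - u))) - (1 + c) * (1 - u) + 1) := by
  have hu : u ≤ 1 := by nlinarith [sq_nonneg v]
  have hx0 : 0 ≤ (1 + c) * (1 - u) := mul_nonneg (by linarith) (by linarith)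
  set s := 1 + c with hs
  set x := s * (1 - u) with hxdef
  obtain ⟨p, hp⟩ : ∃ p, √(1 + 2 * x) = p + 1 := ⟨√(1 + 2 * x) - 1, by ring⟩
  have hsq : (p + 1) ^ 2 = 1 + 2 * x := by
    rw [← hp]; exact Real.sq_sqrt (by linarith)
  have hp1 : 1 ≤ p + 1 := by
    rw [← hp]; exact Real.one_le_sqrt.2 (by linarith)
  have hp2 : p ≤ 2 := by nlinarith
  rw [hp]
  have hxp : x = p * (p + 2) / 2 := by linarith
  have hs0 : 0 < s := by linarith
  refine le_of_mul_le_mul_left ?_ (pow_pos hs0 2)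
  have hy : s ^ 2 * ((1 - c) * v) ^ 2 = (2 - s) ^ 2 * x * (2 * s - x) := by
    have hv : v ^ 2 = 1 - u ^ 2 := by linarith
    rw [mul_pow, hv, hxdef, hs]; ring
  rw [hy, hxp]
  have h1 : 0 ≤ 2 - p * (s - 1) := by nlinarith
  have h2 : 0 ≤ (p + 2) * ((s - p) ^ 2 * (2 - p * (s - 1))) :=
    mul_nonneg (by linarith) (mul_nonneg (sq_nonneg _) h1)
  linear_combination h2

theorem stmt12 (N : ℕ) (hN : 1 ≤ N) (c : ℝ) (hc0 : 0 ≤ c) (hc1 : c ≤ 1) (lam : ℂ) :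
    haveI : NeZero N := ⟨by omega⟩
    let P : Matrix (ZMod N) (ZMod N) ℂ :=
      Matrix.of fun i k : ZMod N => if k = i - 1 then 1 else 0
    let L : Matrix (ZMod N) (ZMod N) ℂ :=
      (1 + (c : ℂ)) • (1 : Matrix (ZMod N) (ZMod N) ℂ) - P - (c : ℂ) • P ^ (N - 1)
    L.charpoly.IsRoot lam →
      0 ≤ lam.re ∧ lam.re ≤ 4 ∧
      (lam.re ≤ 3 / 2 → lam.im ^ 2 ≤ 1 - (lam.re - 1) ^ 2) ∧
      (3 / 2 < lam.re → lam.re ≤ 4 →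
        lam.im ^ 2 ≤ (1 / 2) * (3 - Real.sqrt (1 + 2 * lam.re)) ^ 2 *
          (Real.sqrt (1 + 2 * lam.re) - lam.re + 1)) := by
  haveI : NeZero N := ⟨by omega⟩
  intro P L hroot
  have hPN : P ^ N = 1 := by
    rw [show P ^ N = _ from shift_pow N N]
    ext i k
    simp [Matrix.one_apply, eq_comm]
  have hspec : lam ∈ spectrum ℂ L := Matrix.mem_spectrum_of_isRoot_charpoly hroot
  have hL : L = Polynomial.aeval P (Polynomial.C (1 + (c : ℂ)) - Polynomial.X
      - Polynomial.C (c : ℂ) * Polynomial.X ^ (N - 1)) := by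
    simp [L, Algebra.algebraMap_eq_smul_one, add_smul]
  rw [hL, spectrum.map_polynomial_aeval_of_nonempty _ _
    (spectrum.nonempty_of_isAlgClosed_of_finiteDimensional ℂ P)] at hspec
  obtain ⟨z, hz, rfl⟩ := hspec
  have hzN : z ^ N = 1 := by
    have := spectrum.pow_mem_pow P N hz
    rwa [hPN, spectrum.one_eq, Set.mem_singleton_iff] at this
  have hnorm : ‖z‖ = 1 := Complex.norm_eq_one_of_pow_eq_one hzN (by omega)
  have hinv : z ^ (N - 1) = (starRingEnd ℂ) z := by
    have hz0 : z ≠ 0 := by rintro rfl; simp at hnorm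
    apply mul_left_cancel₀ hz0
    rw [← pow_succ', Nat.sub_add_cancel hN, hzN, Complex.mul_conj, Complex.normSq_eq_norm_sq,
      hnorm]
    simp
  have huv : z.re ^ 2 + z.im ^ 2 = 1 := by
    have := Complex.normSq_eq_norm_sq z
    rw [hnorm, Complex.normSq_apply] at this
    linarith
  simp only [Polynomial.eval_sub, Polynomial.eval_C, Polynomial.eval_X, Polynomial.eval_mul,
    Polynomial.eval_pow, hinv]
  set w : ℂ := 1 + (c : ℂ) - z - (c : ℂ) * (starRingEnd ℂ) z with hw
  have hre : w.re = (1 + c) * (1 - z.re) := by simp [hw]; ring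
  have him : w.im ^ 2 = ((1 - c) * z.im) ^ 2 := by simp [hw]; ring
  have hu1 : z.re ≤ 1 := by nlinarith [sq_nonneg z.im]
  have hu2 : -1 ≤ z.re := by nlinarith [sq_nonneg z.im]
  rw [hre, him]
  exact ⟨mul_nonneg (by linarith) (by linarith), by nlinarith,
    circle_bound hc0 hc1 huv, fun _ => envelope_bound hc0 hc1 huv⟩
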